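/- For every t ≥ 1 and n ≥ 1, the number W_t(n) of t-stack sortable permutations of length n satisfies W_t(n) ≤ (t+1)^{2n}. -/

import Mathlib

def push (x : ℕ) : List ℕ → List ℕ → List ℕ × List ℕ
  | [], out => ([x], out)
  | t :: s, out => if t < x then push x s (out ++ [t]) else (x :: t :: s, out)

def sortAux : List ℕ → List ℕ → List ℕ → List ℕ
  | [], stack, out => out ++ stack
  | x :: xs, stack, out =>
      let r := push x stack out
      sortAux xs r.1 r.2

/-- The stack sorting map `s`: `s(∅) = ∅` and `s(L n R) = s(L) s(R) n` with `n` maximal. -/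
def stackSort (p : List ℕ) : List ℕ := sortAux p [] []

open List

/-!
An increasing subsequence of length `k + 1` followed by a smaller entry leaves, after a sorting pass,
one of length `k` followed by the same entry. A word sorted by `t` passes therefore avoids the
pattern `2 3 ⋯ (t+2) 1`, and it remains to count the avoiders.

Read an avoider from left to right, set its right-to-left minima aside, and insert the other entries
into a tableau with `t` rows by Schensted's algorithm, where entries smaller than everything that is
still to come no longer move. The bumping path of an entry pushed out of the last row would yield an
increasing subsequence of length `t + 1`, all of it above some later entry, so `t` rows suffice. The
insertion can be undone from the final tableau and the rows where the insertions stop. Recording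
these rows by position, and the final rows by value, with `0` for the minima, encodes the avoider by
two words of length `n` over `t + 1` letters.
-/

section RunDrop

variable {α : Type*} [Preorder α]

/-- `p` contains the pattern `2 3 ⋯ (k+1) 1`: `k` increasing entries, not necessarily adjacent, are
followed by an entry smaller than all of them. -/
def HasRunDrop (k : ℕ) (p : List α) : Prop :=
  ∃ s a, s.length = k ∧ s.Pairwise (· < ·) ∧ (∀ b ∈ s, a < b) ∧ s ++ [a] <+ p

theorem not_hasRunDrop_one_of_pairwise_lt {p : List α} (hp : p.Pairwise (· < ·)) :
    ¬ HasRunDrop 1 p := by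
  rintro ⟨s, a, hlen, -, hlt, hsub⟩
  obtain ⟨b, rfl⟩ := length_eq_one_iff.1 hlen
  have hba : b < a := by simpa using hp.sublist hsub
  exact hba.asymm (hlt b (by simp))

end RunDrop

section StackSort

theorem exists_eq_append_max_cons {α : Type*} [LinearOrder α] {p : List α} (hp : p ≠ []) :
    ∃ L n R, p = L ++ n :: R ∧ (∀ a ∈ L, a < n) ∧ ∀ a ∈ R, a ≤ n := by
  induction p with
  | nil => contradiction
  | cons x p ih =>
    rcases eq_or_ne p [] with rfl | hne
    · exact ⟨[], x, [], by simp⟩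
    obtain ⟨L, n, R, rfl, hL, hR⟩ := ih hne
    rcases lt_or_ge x n with hx | hx
    · exact ⟨x :: L, n, R, rfl, by simpa [hx] using hL, hR⟩
    · refine ⟨[], x, L ++ n :: R, rfl, by simp, fun a ha => ?_⟩
      rcases mem_append.1 ha with ha | ha
      · exact (hL a ha).le.trans hx
      · rcases mem_cons.1 ha with rfl | ha
        exacts [hx, (hR a ha).trans hx]

theorem max_split_induction {α : Type*} [LinearOrder α] {P : List α → Prop} (nil : P [])
    (split : ∀ L n R, (∀ a ∈ L, a < n) → (∀ a ∈ R, a ≤ n) → P L → P R → P (L ++ n :: R))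
    (p : List α) : P p := by
  induction hlen : p.length using Nat.strong_induction_on generalizing p with
  | _ m ih =>
    rcases eq_or_ne p [] with rfl | hne
    · exact nil
    obtain ⟨L, n, R, rfl, hL, hR⟩ := exists_eq_append_max_cons hne
    simp only [length_append, length_cons] at hlen
    exact split L n R hL hR (ih _ (by omega) L rfl) (ih _ (by omega) R rfl)

theorem push_append_output (x : ℕ) (st o out : List ℕ) :
    push x st (o ++ out) = ((push x st out).1, o ++ (push x st out).2) := by
  induction st generalizing out with
  | nil => rfl
  | cons y st ih =>
    by_cases hy : y < x
    · simp only [push, if_pos hy, append_assoc, ih]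
    · simp only [push, if_neg hy]

theorem push_append_stack {x n : ℕ} (hx : x ≤ n) (st out : List ℕ) :
    push x (st ++ [n]) out = ((push x st out).1 ++ [n], (push x st out).2) := by
  induction st generalizing out with
  | nil => simp [push, hx.not_gt]
  | cons y st ih =>
    by_cases hy : y < x
    · simp only [cons_append, push, if_pos hy, ih]
    · simp only [cons_append, push, if_neg hy]

theorem push_of_forall_lt {x : ℕ} {st : List ℕ} (hst : ∀ y ∈ st, y < x) (out : List ℕ) :
    push x st out = ([x], out ++ st) := by
  induction st generalizing out with
  | nil => simp [push]
  | cons y st ih =>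
    rw [forall_mem_cons] at hst
    simp [push, hst.1, ih hst.2]

theorem push_stack_subset (x : ℕ) (st out : List ℕ) : (push x st out).1 ⊆ x :: st := by
  induction st generalizing out with
  | nil => simp [push]
  | cons y st ih =>
    by_cases hy : y < x
    · simp only [push, if_pos hy]
      exact fun a ha => cons_subset_cons _ (subset_cons_self _ _) (ih _ ha)
    · simp [push, if_neg hy]

theorem sortAux_eq_append (xs st out : List ℕ) :
    sortAux xs st out = out ++ sortAux xs st [] := by
  induction xs generalizing st out with
  | nil => rfl
  | cons x xs ih =>
    have hpush := push_append_output x st out []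
    rw [append_nil] at hpush
    rw [sortAux, sortAux, hpush, ih, ih _ (push x st []).2, append_assoc]

theorem sortAux_append_stack {xs : List ℕ} {n : ℕ} (hxs : ∀ x ∈ xs, x ≤ n) (st out : List ℕ) :
    sortAux xs (st ++ [n]) out = sortAux xs st out ++ [n] := by
  induction xs generalizing st out with
  | nil => simp [sortAux]
  | cons x xs ih =>
    rw [forall_mem_cons] at hxs
    rw [sortAux, sortAux, push_append_stack hxs.1, ih hxs.2]

theorem sortAux_append_cons {L st : List ℕ} {n : ℕ} (hL : ∀ a ∈ L, a < n)
    (hst : ∀ a ∈ st, a < n) (R out : List ℕ) :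
    sortAux (L ++ n :: R) st out = sortAux R [n] (sortAux L st out) := by
  induction L generalizing st out with
  | nil => simp only [nil_append, sortAux, push_of_forall_lt hst]
  | cons x L ih =>
    rw [forall_mem_cons] at hL
    have hpush : ∀ a ∈ (push x st out).1, a < n := fun a ha =>
      (forall_mem_cons (p := (· < n))).2 ⟨hL.1, hst⟩ a (push_stack_subset x st out ha)
    exact ih hL.2 hpush _

theorem stackSort_append_max_cons {L R : List ℕ} {n : ℕ} (hL : ∀ a ∈ L, a < n)
    (hR : ∀ a ∈ R, a ≤ n) :
    stackSort (L ++ n :: R) = stackSort L ++ stackSort R ++ [n] := by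
  have hbottom := sortAux_append_stack hR [] (stackSort L)
  rw [nil_append, sortAux_eq_append R []] at hbottom
  rw [stackSort, sortAux_append_cons hL (by simp)]
  exact hbottom

theorem sublist_stackSort_of_pairwise_lt {s p : List ℕ} (hs : s.Pairwise (· < ·))
    (hsp : s <+ p) : s <+ stackSort p := by
  induction p using max_split_induction generalizing s with
  | nil => simp_all
  | split L n R hL hR ihL ihR =>
    rw [stackSort_append_max_cons hL hR, append_assoc]
    obtain ⟨u, v, rfl, hu, hv⟩ := sublist_append_iff.1 hsp
    rw [pairwise_append] at hs
    refine (ihL hs.1 hu).append ?_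
    rcases sublist_cons_iff.1 hv with hv | ⟨v, rfl, hvR⟩
    · exact (ihR hs.2.1 hv).trans (sublist_append_left _ _)
    · have hnil : v = [] := eq_nil_iff_forall_not_mem.2 fun z hz =>
        ((pairwise_cons.1 hs.2.1).1 z hz).not_ge (hR z (hvR.subset hz))
      simp [hnil]

theorem append_singleton_sublist_stackSort {s p : List ℕ} {a c : ℕ}
    (hs : (s ++ [c]).Pairwise (· < ·)) (hac : a < c) (hsp : s ++ [c, a] <+ p) :
    s ++ [a] <+ stackSort p := by
  induction p using max_split_induction generalizing s with
  | nil => simp at hsp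
  | split L n R hL hR ihL ihR =>
    rw [stackSort_append_max_cons hL hR]
    refine Sublist.trans ?_ (sublist_append_left _ _)
    have hinc := (pairwise_append.1 hs).1
    have of_left_of_right (hsL : s <+ L) (haR : [a] <+ R) :
        s ++ [a] <+ stackSort L ++ stackSort R :=
      (sublist_stackSort_of_pairwise_lt hinc hsL).append
        (sublist_stackSort_of_pairwise_lt (pairwise_singleton _ _) haR)
    obtain ⟨u, v, huv, hu, hv⟩ := sublist_append_iff.1 hsp
    rcases append_eq_append_iff.1 huv with ⟨w, rfl, hw⟩ | ⟨w, rfl, rfl⟩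
    · have hsL : s <+ L := (sublist_append_left _ _).trans hu
      simp only [cons_eq_append_iff, nil_eq, append_eq_nil_iff] at hw
      obtain ⟨rfl, rfl⟩ | ⟨_, rfl, ⟨rfl, rfl⟩ | ⟨_, rfl, rfl, rfl⟩⟩ := hw
      · exact of_left_of_right hsL hv.tail
      · have hcn : c < n := hL c (hu.subset (by simp))
        exact of_left_of_right hsL (hv.of_cons_of_ne (hac.trans hcn).ne)
      · exact (ihL hs hu).trans (sublist_append_left _ _)
    · rcases sublist_cons_iff.1 hv with hvR | ⟨r, hr, hrR⟩
      · rw [append_assoc] at hs ⊢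
        exact (sublist_stackSort_of_pairwise_lt (pairwise_append.1 hinc).1 hu).append
          (ihR (pairwise_append.1 hs).2.1 hvR)
      · rcases append_eq_cons_iff.1 hr with ⟨rfl, hca⟩ | ⟨w, rfl, rfl⟩
        · obtain ⟨-, rfl⟩ : c = n ∧ [a] = r := by simpa using hca
          exact of_left_of_right (by simpa using hu) hrR
        · have hnc : n < c := (pairwise_append.1 hs).2.2 n (by simp) c (by simp)
          exact absurd (hR c (hrR.subset (by simp))) hnc.not_ge

theorem HasRunDrop.stackSort {k : ℕ} {p : List ℕ} (h : HasRunDrop (k + 1) p) :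
    HasRunDrop k (stackSort p) := by
  obtain ⟨s, a, hlen, hinc, hlt, hsub⟩ := h
  obtain ⟨r, c, rfl⟩ := (eq_nil_or_concat' s).resolve_left (by rintro rfl; simp at hlen)
  refine ⟨r, a, by simpa using hlen, (pairwise_append.1 hinc).1,
    fun b hb => hlt b (mem_append_left _ hb), ?_⟩
  exact append_singleton_sublist_stackSort hinc (hlt c (by simp)) (by simpa using hsub)

theorem HasRunDrop.iterate_stackSort {t : ℕ} {p : List ℕ} (h : HasRunDrop (t + 1) p) :
    HasRunDrop 1 (_root_.stackSort^[t] p) := by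
  induction t generalizing p with
  | zero => exact h
  | succ t ih => exact ih h.stackSort

theorem not_hasRunDrop_of_iterate_stackSort_eq_range' {t n : ℕ} {p : List ℕ}
    (hp : stackSort^[t] p = range' 1 n) : ¬ HasRunDrop (t + 1) p := fun h =>
  not_hasRunDrop_one_of_pairwise_lt (hp ▸ pairwise_lt_range') h.iterate_stackSort

end StackSort

theorem words_eq_range (k n : ℕ) :
    {w : List ℕ | w.length = n ∧ ∀ c ∈ w, c < k} =
      Set.range fun f : Fin n → Fin k => ofFn fun i => (f i : ℕ) := by
  ext w
  constructor
  · rintro ⟨rfl, hw⟩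
    exact ⟨fun i => ⟨w[i], hw _ (getElem_mem _)⟩, ofFn_getElem⟩
  · rintro ⟨f, rfl⟩
    simp [mem_ofFn]

theorem ncard_le_pow_of_injOn {β : Type*} {s : Set β} {f : β → List ℕ} {k n : ℕ}
    (hf : s.InjOn f) (hlen : ∀ b ∈ s, (f b).length = n) (hlt : ∀ b ∈ s, ∀ c ∈ f b, c < k) :
    s.ncard ≤ k ^ n := by
  have hmaps : ∀ b ∈ s, f b ∈ Set.range fun g : Fin n → Fin k => ofFn fun i => (g i : ℕ) :=
    fun b hb => words_eq_range k n ▸ ⟨hlen b hb, hlt b hb⟩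
  calc s.ncard
      ≤ (Set.range fun g : Fin n → Fin k => ofFn fun i => (g i : ℕ)).ncard :=
        Set.ncard_le_ncard_of_injOn f hmaps hf (Set.finite_range _)
    _ ≤ Nat.card (Fin n → Fin k) := Finite.card_range_le _
    _ = k ^ n := by simp

section Rows

variable {α : Type*}

/-- The reading word of a tableau given by its list of rows: the last row comes first. -/
def readingWord (T : List (List α)) : List α := T.reverse.flatten

theorem readingWord_cons (R : List α) (T : List (List α)) :
    readingWord (R :: T) = readingWord T ++ R := by
  simp [readingWord]

theorem append_inj_of_forall_of_forall_not {P : α → Prop} {B B' C C' : List α}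
    (hB : ∀ b ∈ B, P b) (hC : ∀ c ∈ C, ¬ P c) (hB' : ∀ b ∈ B', P b) (hC' : ∀ c ∈ C', ¬ P c)
    (h : B ++ C = B' ++ C') : B = B' ∧ C = C' := by
  classical
  have hfilter {B C : List α} (hB : ∀ b ∈ B, P b) (hC : ∀ c ∈ C, ¬ P c) :
      (B ++ C).filter P = B := by
    rw [filter_append, filter_eq_self.2 (by simpa using hB),
      filter_eq_nil_iff.2 (by simpa using hC), append_nil]
  obtain rfl : B = B' := by rw [← hfilter hB hC, h, hfilter hB' hC']
  exact ⟨rfl, append_cancel_left h⟩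

theorem append_cons_inj_of_forall_of_forall_not {P : α → Prop} {B B' C C' : List α} {x x' : α}
    (hB : ∀ b ∈ B, P b) (hx : P x) (hC : ∀ c ∈ C, ¬ P c)
    (hB' : ∀ b ∈ B', P b) (hx' : P x') (hC' : ∀ c ∈ C', ¬ P c)
    (h : B ++ x :: C = B' ++ x' :: C') : B = B' ∧ x = x' ∧ C = C' := by
  have hsplit := append_inj_of_forall_of_forall_not (P := P) (B := B ++ [x]) (B' := B' ++ [x'])
    (forall_mem_append.2 ⟨hB, by simpa using hx⟩) hC
    (forall_mem_append.2 ⟨hB', by simpa using hx'⟩) hC' (by simpa using h)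
  obtain ⟨hBx, rfl⟩ := hsplit
  obtain ⟨rfl, hxx⟩ := append_inj' hBx rfl
  exact ⟨rfl, singleton_inj.1 hxx, rfl⟩

section RowIndex

variable [DecidableEq α]

/-- The index of the first row of `F` that contains `v`, or `F.length` if there is none. -/
def rowIndex (F : List (List α)) (v : α) : ℕ := F.findIdx (v ∈ ·)

theorem rowIndex_lt_length {F : List (List α)} {v : α} (hv : v ∈ F.flatten) :
    rowIndex F v < F.length := by
  simpa [rowIndex, findIdx_lt_length, mem_flatten] using hv

theorem mem_getElem_iff_rowIndex_eq {F : List (List α)} (hF : F.flatten.Nodup) {v : α} {i : ℕ}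
    (hi : i < F.length) : v ∈ F[i] ↔ rowIndex F v = i := by
  constructor
  · intro hv
    refine (findIdx_eq hi).2 ⟨by simpa using hv, fun j hj => ?_⟩
    have hdisj := pairwise_iff_getElem.1 (nodup_flatten.1 hF).2 j i (hj.trans hi) hi hj
    simpa using fun hvj => hdisj hvj hv
  · rintro rfl
    exact of_decide_eq_true (findIdx_getElem (w := hi))

/-- The word over the row indices that encodes an arrangement of the entries of `l`: the labels `cs`
of its positions, followed by the final rows of its entries in the order of `l`. -/
def labelWord (l : List α) (cs : List ℕ) (F : List (List α)) : List ℕ :=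
  cs ++ l.map (rowIndex F)

end RowIndex

end Rows

section Schensted

variable {α : Type*} [Preorder α]

/-- Every strictly increasing subsequence of `u` can be exchanged for an equally long one of `w`
that satisfies the same strict bounds. This is the part of Knuth equivalence that bounds the height
of a tableau by the increasing subsequences of the inserted word, and it survives freezing. -/
def IncreasingDominated (u w : List α) : Prop :=
  ∀ ⦃s⦄, s <+ u → s.Pairwise (· < ·) → ∃ s', s' <+ w ∧ s'.Pairwise (· < ·) ∧
    s'.length = s.length ∧ (∀ a, (∀ z ∈ s, a < z) → ∀ z ∈ s', a < z) ∧
    ∀ b, (∀ z ∈ s, z < b) → ∀ z ∈ s', z < b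

namespace IncreasingDominated

variable {u v w u' w' : List α}

theorem refl (u : List α) : IncreasingDominated u u := fun s hs hinc =>
  ⟨s, hs, hinc, rfl, fun _ h => h, fun _ h => h⟩

theorem trans (huv : IncreasingDominated u v) (hvw : IncreasingDominated v w) :
    IncreasingDominated u w := by
  intro s hs hinc
  obtain ⟨s', hs', hinc', hlen, hlow, hupp⟩ := huv hs hinc
  obtain ⟨s'', hs'', hinc'', hlen', hlow', hupp'⟩ := hvw hs' hinc'
  exact ⟨s'', hs'', hinc'', hlen'.trans hlen, fun a h => hlow' a (hlow a h),
    fun b h => hupp' b (hupp b h)⟩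

theorem append (h : IncreasingDominated u w) (h' : IncreasingDominated u' w') :
    IncreasingDominated (u ++ u') (w ++ w') := by
  intro s hs hinc
  obtain ⟨s₁, s₂, rfl, hs₁, hs₂⟩ := sublist_append_iff.1 hs
  obtain ⟨hinc₁, hinc₂, hlt⟩ := pairwise_append.1 hinc
  obtain ⟨r₁, hr₁, hrinc₁, hlen₁, hlow₁, hupp₁⟩ := h hs₁ hinc₁
  obtain ⟨r₂, hr₂, hrinc₂, hlen₂, hlow₂, hupp₂⟩ := h' hs₂ hinc₂
  refine ⟨r₁ ++ r₂, hr₁.append hr₂, pairwise_append.2 ⟨hrinc₁, hrinc₂, fun x hx y hy => ?_⟩,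
    by simp only [length_append, hlen₁, hlen₂], fun a ha => ?_, fun b hb => ?_⟩
  · exact hlow₂ x (fun z hz => hupp₁ z (fun z' hz' => hlt z' hz' z hz) x hx) y hy
  · rw [forall_mem_append] at ha ⊢
    exact ⟨hlow₁ a ha.1, hlow₂ a ha.2⟩
  · rw [forall_mem_append] at hb ⊢
    exact ⟨hupp₁ b hb.1, hupp₂ b hb.2⟩

end IncreasingDominated

theorem eq_nil_or_singleton_of_pairwise_lt_of_sublist {s u : List α} (hs : s.Pairwise (· < ·))
    (hu : u.Pairwise (· > ·)) (hsu : s <+ u) : s = [] ∨ ∃ z ∈ u, s = [z] := by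
  rcases s with _ | ⟨y, _ | ⟨z, s⟩⟩
  · exact .inl rfl
  · exact .inr ⟨y, hsu.subset mem_cons_self, rfl⟩
  · exact absurd (rel_of_pairwise_cons hs mem_cons_self)
      (rel_of_pairwise_cons (hu.sublist hsu) mem_cons_self).asymm

theorem IncreasingDominated.of_subset {u w : List α} (hu : u.Pairwise (· > ·)) (huw : u ⊆ w) :
    IncreasingDominated u w := by
  intro s hs hinc
  refine ⟨s, ?_, hinc, rfl, fun _ h => h, fun _ h => h⟩
  rcases eq_nil_or_singleton_of_pairwise_lt_of_sublist hinc hu hs with rfl | ⟨z, hz, rfl⟩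
  exacts [nil_sublist _, singleton_sublist.2 (huw hz)]

theorem IncreasingDominated.bump {B C : List α} {x y : α}
    (hrow : (B ++ x :: C).Pairwise (· > ·)) (hyx : y < x) (hC : ∀ c ∈ C, c < y) :
    IncreasingDominated (y :: (B ++ x :: C)) (B ++ y :: C ++ [x]) := by
  intro s hs hinc
  rcases sublist_cons_iff.1 hs with hs | ⟨r, rfl, hr⟩
  · exact of_subset hrow (fun z hz => by grind) hs hinc
  rcases eq_nil_or_singleton_of_pairwise_lt_of_sublist hinc.of_cons hrow hr
    with rfl | ⟨z, hz, rfl⟩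
  · exact ⟨[y], by simp, hinc, rfl, fun _ h => h, fun _ h => h⟩
  have hyz : y < z := rel_of_pairwise_cons hinc mem_cons_self
  have hxz : x ≤ z := by
    rcases mem_append.1 hz with hz | hz
    · exact ((pairwise_append.1 hrow).2.2 z hz x mem_cons_self).le
    rcases mem_cons.1 hz with rfl | hz
    exacts [le_rfl, absurd (hC z hz) hyz.asymm]
  have hsub : [y, x] <+ B ++ y :: C ++ [x] :=
    Sublist.append (l₁ := [y]) (by simp) (Sublist.refl _)
  refine ⟨[y, x], hsub, by simpa using hyx, rfl, fun a ha => ?_, fun b hb => ?_⟩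
  · have hay : a < y := ha y mem_cons_self
    simpa using ⟨hay, hay.trans hyx⟩
  · have hxb : x < b := hxz.trans_lt (hb z (by simp))
    simpa using ⟨hyx.trans hxb, hxb⟩

/-- Schensted insertion with rows written in decreasing order and entries `≤ m` frozen:
`SchenstedInsert m x T c U` says that inserting `x > m` into the tableau `T` yields `U`, where each
inserted entry bumps the largest smaller entry of its row into the next row, unless that entry is
frozen or absent; `c` is the index of the row where the bumping stops.
No rows are created, so an entry bumped out of the last row makes the insertion impossible. -/
inductive SchenstedInsert (m : α) : α → List (List α) → ℕ → List (List α) → Prop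
  | settle {x : α} {B C : List α} {T : List (List α)} (hmx : m < x) (hB : ∀ b ∈ B, x < b)
      (hC : ∀ c ∈ C, c ≤ m) : SchenstedInsert m x ((B ++ C) :: T) 0 ((B ++ x :: C) :: T)
  | bump {x y : α} {B C : List α} {T U : List (List α)} {c : ℕ} (hyx : y < x)
      (hB : ∀ b ∈ B, x < b) (hC : ∀ c ∈ C, c < y) (h : SchenstedInsert m y T c U) :
      SchenstedInsert m x ((B ++ y :: C) :: T) (c + 1) ((B ++ x :: C) :: U)

namespace SchenstedInsert

variable {m x : α} {T U : List (List α)} {c : ℕ}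

theorem index_lt_length (h : SchenstedInsert m x T c U) : c < T.length := by
  induction h <;> simp_all

theorem length_eq (h : SchenstedInsert m x T c U) : U.length = T.length := by
  induction h <;> simp_all

theorem flatten_perm (h : SchenstedInsert m x T c U) : U.flatten ~ x :: T.flatten := by
  induction h with
  | settle => simp [perm_middle]
  | bump _ _ _ _ ih =>
    simp only [flatten_cons, append_assoc, cons_append]
    refine perm_middle.trans (.cons _ (.append_left _ ?_))
    exact (ih.append_left _).trans perm_middle

theorem forall_pairwise_gt (h : SchenstedInsert m x T c U) (hT : ∀ R ∈ T, R.Pairwise (· > ·)) :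
    ∀ R ∈ U, R.Pairwise (· > ·) := by
  induction h with
  | settle hmx hB hC =>
    rw [forall_mem_cons] at hT ⊢
    obtain ⟨hBrow, hCrow, hBC⟩ := pairwise_append.1 hT.1
    refine ⟨pairwise_append.2 ⟨hBrow, pairwise_cons.2 ⟨?_, hCrow⟩, fun b hb => ?_⟩, hT.2⟩
    · exact fun c hc => (hC c hc).trans_lt hmx
    · exact forall_mem_cons.2 ⟨hB b hb, hBC b hb⟩
  | bump hyx hB hC _ ih =>
    rw [forall_mem_cons] at hT ⊢
    obtain ⟨hBrow, hCrow, hBC⟩ := pairwise_append.1 hT.1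
    refine ⟨pairwise_append.2 ⟨hBrow, pairwise_cons.2 ⟨?_, hCrow.of_cons⟩, fun b hb => ?_⟩, ih hT.2⟩
    · exact fun c hc => (hC c hc).trans hyx
    · exact forall_mem_cons.2 ⟨hB b hb, (forall_mem_cons.1 (hBC b hb)).2⟩

theorem readingWord_dominated (h : SchenstedInsert m x T c U)
    (hT : ∀ R ∈ T, R.Pairwise (· > ·)) :
    IncreasingDominated (readingWord U) (readingWord T ++ [x]) := by
  have hU := h.forall_pairwise_gt hT
  induction h with
  | settle =>
    rw [readingWord_cons, readingWord_cons, append_assoc]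
    exact (IncreasingDominated.refl _).append
      (.of_subset (forall_mem_cons.1 hU).1 (fun z hz => by grind))
  | @bump x y B C T U _ hyx _ hC _ ih =>
    rw [forall_mem_cons] at hT hU
    rw [readingWord_cons, readingWord_cons, append_assoc]
    have hrow := (IncreasingDominated.refl (readingWord T)).append (.bump hU.1 hyx hC)
    refine ((ih hT.2 hU.2).append (.refl _)).trans ?_
    simpa using hrow

end SchenstedInsert

theorem SchenstedInsert.injective {m x x' : α} {T T' U : List (List α)} {c : ℕ}
    (h : SchenstedInsert m x T c U) (h' : SchenstedInsert m x' T' c U) : x = x' ∧ T = T' := by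
  induction h generalizing x' T' with
  | @settle x B C T hmx hB hC =>
    generalize hU : (B ++ x :: C) :: T = U at h'
    cases h' with
    | settle hmx' hB' hC' =>
      obtain ⟨hrow, rfl⟩ := cons_eq_cons.1 hU
      obtain ⟨rfl, rfl, rfl⟩ := append_cons_inj_of_forall_of_forall_not (P := (m < ·))
        (fun b hb => hmx.trans (hB b hb)) hmx (fun c hc => (hC c hc).not_gt)
        (fun b hb => hmx'.trans (hB' b hb)) hmx' (fun c hc => (hC' c hc).not_gt) hrow
      exact ⟨rfl, rfl⟩
  | @bump x y B C T U c hyx hB hC _ ih =>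
    generalize hV : (B ++ x :: C) :: U = V at h'
    cases h' with
    | @bump _ y' _ _ _ _ _ hyx' hB' hC' h' =>
      obtain ⟨hrow, rfl⟩ := cons_eq_cons.1 hV
      obtain ⟨rfl, rfl⟩ := ih h'
      obtain ⟨rfl, rfl, rfl⟩ := append_cons_inj_of_forall_of_forall_not (P := (y < ·))
        (fun b hb => hyx.trans (hB b hb)) hyx (fun c hc => (hC c hc).asymm)
        (fun b hb => hyx'.trans (hB' b hb)) hyx' (fun c hc => (hC' c hc).asymm) hrow
      exact ⟨rfl, rfl⟩

end Schensted

section Growth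

variable {α : Type*} [LinearOrder α]

theorem exists_eq_append_of_pairwise_gt {R : List α} (hR : R.Pairwise (· > ·)) {x : α}
    (hx : x ∉ R) : ∃ B C, R = B ++ C ∧ (∀ b ∈ B, x < b) ∧ ∀ c ∈ C, c < x := by
  induction R with
  | nil => exact ⟨[], [], by simp⟩
  | cons z R ih =>
    rw [pairwise_cons] at hR
    rw [mem_cons, not_or] at hx
    rcases lt_or_gt_of_ne hx.1 with hxz | hzx
    · obtain ⟨B, C, rfl, hB, hC⟩ := ih hR.2 hx.2
      exact ⟨z :: B, C, rfl, forall_mem_cons.2 ⟨hxz, hB⟩, hC⟩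
    · exact ⟨[], z :: R, rfl, by simp, forall_mem_cons.2 ⟨hzx, fun c hc => (hR.1 c hc).trans hzx⟩⟩

/- When the insertion fails, the entries along its bumping path form the increasing sequence. -/
theorem exists_schenstedInsert_or_exists_increasing {m x : α} {T : List (List α)} (hmx : m < x)
    (hT : ∀ R ∈ T, R.Pairwise (· > ·)) (hnodup : (x :: T.flatten).Nodup) :
    (∃ c U, SchenstedInsert m x T c U) ∨ ∃ s, s <+ readingWord T ++ [x] ∧
      s.Pairwise (· < ·) ∧ s.length = T.length + 1 ∧ (∀ z ∈ s, m < z) ∧ ∀ z ∈ s, z ≤ x := by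
  induction T generalizing x with
  | nil => exact .inr ⟨[x], by simp [readingWord, hmx]⟩
  | cons R T ih =>
    rw [forall_mem_cons] at hT
    rw [nodup_cons, flatten_cons, mem_append, not_or] at hnodup
    obtain ⟨B, C, rfl, hB, hC⟩ := exists_eq_append_of_pairwise_gt hT.1 hnodup.1.1
    rcases C with _ | ⟨y, C⟩
    · exact .inl ⟨_, _, .settle hmx hB (by simp)⟩
    have hCy : ∀ c ∈ C, c < y := (pairwise_cons.1 (pairwise_append.1 hT.1).2.1).1
    have hyx : y < x := hC y mem_cons_self
    rcases le_or_gt y m with hym | hmy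
    · have hfrozen : ∀ c ∈ y :: C, c ≤ m :=
        forall_mem_cons.2 ⟨hym, fun c hc => (hCy c hc).le.trans hym⟩
      exact .inl ⟨_, _, .settle hmx hB hfrozen⟩
    have hnodup' : (y :: T.flatten).Nodup :=
      hnodup.2.sublist (Sublist.append_right (l₁ := [y]) (by simp) _)
    rcases ih hmy hT.2 hnodup' with ⟨c, U, h⟩ | ⟨s, hs, hinc, hlen, hms, hsy⟩
    · exact .inl ⟨_, _, .bump hyx hB hCy h⟩
    refine .inr ⟨s ++ [x], ?_, ?_, by simp [hlen], ?_, ?_⟩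
    · rw [readingWord_cons]
      exact (hs.trans ((Sublist.refl _).append (by simp))).append_right _
    · refine pairwise_append.2 ⟨hinc, pairwise_singleton _ _, fun z hz => ?_⟩
      exact forall_mem_singleton.2 ((hsy z hz).trans_lt hyx)
    · exact forall_mem_append.2 ⟨hms, forall_mem_singleton.2 hmx⟩
    · exact forall_mem_append.2
        ⟨fun z hz => (hsy z hz).trans hyx.le, forall_mem_singleton.2 le_rfl⟩

/-- `GrowthEncoding p L T cs F` describes how `p` is read from left to right: a right-to-left
minimum of `p` is put in front of `L`, any other entry is inserted into the tableau `T`, where the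
entries smaller than all the remaining ones are frozen. The row where an insertion stops, counted
from `1`, is its label in `cs`, and `0` labels a right-to-left minimum; `F` consists of the final
`L`, as row `0`, and the final rows of `T`. -/
inductive GrowthEncoding : List α → List α → List (List α) → List ℕ → List (List α) → Prop
  | nil (L : List α) (T : List (List α)) : GrowthEncoding [] L T [] (L :: T)
  | minimum {x : α} {xs L : List α} {T F : List (List α)} {cs : List ℕ} (hx : ∀ y ∈ xs, x < y)
      (h : GrowthEncoding xs (x :: L) T cs F) : GrowthEncoding (x :: xs) L T (0 :: cs) F
  | insert {x m : α} {xs L : List α} {T U F : List (List α)} {c : ℕ} {cs : List ℕ}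
      (hm : IsLeast {y | y ∈ xs} m) (hU : SchenstedInsert m x T c U)
      (h : GrowthEncoding xs L U cs F) : GrowthEncoding (x :: xs) L T ((c + 1) :: cs) F

namespace GrowthEncoding

variable {p q L L' : List α} {T T' F : List (List α)} {cs : List ℕ}

theorem injective (h : GrowthEncoding p L T cs F) (h' : GrowthEncoding q L' T' cs F) :
    p = q ∧ L = L' ∧ T = T' := by
  induction h generalizing q L' T' with
  | nil L T => cases h'; simp
  | minimum _ _ ih =>
    cases h' with
    | minimum _ h' =>
      obtain ⟨rfl, hL, rfl⟩ := ih h'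
      obtain ⟨rfl, rfl⟩ := cons_eq_cons.1 hL
      exact ⟨rfl, rfl, rfl⟩
  | insert hm hU _ ih =>
    cases h' with
    | insert hm' hU' h' =>
      obtain ⟨rfl, rfl, rfl⟩ := ih h'
      obtain rfl := hm.unique hm'
      obtain ⟨rfl, rfl⟩ := hU.injective hU'
      exact ⟨rfl, rfl, rfl⟩

theorem length_labels (h : GrowthEncoding p L T cs F) : cs.length = p.length := by
  induction h <;> simp_all

theorem length_rows (h : GrowthEncoding p L T cs F) : F.length = T.length + 1 := by
  induction h with
  | nil => rfl
  | minimum _ _ ih => exact ih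
  | insert _ hU _ ih => rw [ih, hU.length_eq]

theorem labels_lt (h : GrowthEncoding p L T cs F) : ∀ c ∈ cs, c < T.length + 1 := by
  induction h with
  | nil => simp
  | minimum _ _ ih => exact forall_mem_cons.2 ⟨Nat.succ_pos _, ih⟩
  | insert _ hU _ ih =>
    rw [hU.length_eq] at ih
    exact forall_mem_cons.2 ⟨Nat.succ_lt_succ hU.index_lt_length, ih⟩

theorem flatten_perm (h : GrowthEncoding p L T cs F) : F.flatten ~ p ++ (L ++ T.flatten) := by
  induction h with
  | nil => simp
  | minimum _ _ ih => exact ih.trans perm_middle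
  | insert _ hU _ ih =>
    refine ih.trans ?_
    exact (((hU.flatten_perm.append_left _).trans perm_middle).append_left _).trans perm_middle

theorem forall_pairwise_gt (h : GrowthEncoding p L T cs F) (hL : L.Pairwise (· > ·))
    (hLp : ∀ a ∈ L, ∀ y ∈ p, a < y) (hT : ∀ R ∈ T, R.Pairwise (· > ·)) :
    ∀ R ∈ F, R.Pairwise (· > ·) := by
  induction h with
  | nil => exact forall_mem_cons.2 ⟨hL, hT⟩
  | minimum hx _ ih =>
    simp only [forall_mem_cons] at hLp
    exact ih (pairwise_cons.2 ⟨fun a ha => (hLp a ha).1, hL⟩)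
      (forall_mem_cons.2 ⟨hx, fun a ha => (hLp a ha).2⟩) hT
  | insert _ hU _ ih =>
    simp only [forall_mem_cons] at hLp
    exact ih hL (fun a ha => (hLp a ha).2) (hU.forall_pairwise_gt hT)

end GrowthEncoding

theorem exists_isLeast_of_ne_nil {xs : List α} (hxs : xs ≠ []) :
    ∃ m, IsLeast {y | y ∈ xs} m :=
  ⟨_, minimum_of_length_pos_mem (length_pos_iff.2 hxs), fun _ hy =>
    minimum_of_length_pos_le_of_mem hy _⟩

theorem exists_growthEncoding {pre p : List α} (L : List α) {T : List (List α)}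
    (hT : ∀ R ∈ T, R.Pairwise (· > ·)) (hnodup : (p ++ T.flatten).Nodup)
    (hdom : IncreasingDominated (readingWord T) pre)
    (hp : ¬ HasRunDrop (T.length + 1) (pre ++ p)) : ∃ cs F, GrowthEncoding p L T cs F := by
  induction p generalizing pre L T with
  | nil => exact ⟨_, _, .nil L T⟩
  | cons x xs ih =>
    rw [append_cons] at hp
    by_cases hmin : ∀ y ∈ xs, x < y
    · have hdom' : IncreasingDominated (readingWord T) (pre ++ [x]) := by
        simpa using hdom.append (.of_subset (u := []) .nil (nil_subset [x]))
      obtain ⟨cs, F, h⟩ := ih (x :: L) hT hnodup.of_cons hdom' hp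
      exact ⟨_, _, .minimum hmin h⟩
    obtain ⟨m, hm⟩ :=
      exists_isLeast_of_ne_nil (xs := xs) (by rintro rfl; simp at hmin)
    have hmx : m < x := by
      push Not at hmin
      obtain ⟨y, hy, hyx⟩ := hmin
      refine lt_of_le_of_ne ((hm.2 hy).trans hyx) ?_
      rintro rfl
      exact (nodup_cons.1 hnodup).1 (mem_append_left _ hm.1)
    have hdom' := hdom.append (.refl [x])
    have hnodup' : (xs ++ x :: T.flatten).Nodup := nodup_middle.2 hnodup
    rcases exists_schenstedInsert_or_exists_increasing hmx hT (nodup_append.1 hnodup').2.1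
      with ⟨c, U, hU⟩ | ⟨s, hs, hinc, hlen, hms, -⟩
    · obtain ⟨cs, F, h⟩ := ih L (hU.forall_pairwise_gt hT)
        ((hU.flatten_perm.append_left xs).nodup_iff.2 hnodup')
        ((hU.readingWord_dominated hT).trans hdom') (hU.length_eq ▸ hp)
      exact ⟨_, _, .insert hm hU h⟩
    · obtain ⟨r, hr, hrinc, hrlen, hmr, -⟩ := hdom' hs hinc
      exact absurd ⟨r, m, hrlen.trans hlen, hrinc, hmr m hms,
        hr.append (singleton_sublist.2 hm.1)⟩ hp

theorem eq_of_rowIndex_eq {F G : List (List α)} (hF : F.flatten.Nodup)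
    (hFG : F.flatten ~ G.flatten) (hlen : F.length = G.length)
    (hFrows : ∀ R ∈ F, R.Pairwise (· > ·)) (hGrows : ∀ R ∈ G, R.Pairwise (· > ·))
    (hindex : ∀ v ∈ F.flatten, rowIndex F v = rowIndex G v) : F = G := by
  have hG := hFG.nodup_iff.1 hF
  refine ext_getElem hlen fun i hiF hiG => ?_
  have hmem (v : α) : v ∈ F[i] ↔ v ∈ G[i] := by
    by_cases hv : v ∈ F.flatten
    · rw [mem_getElem_iff_rowIndex_eq hF, mem_getElem_iff_rowIndex_eq hG, hindex v hv]
    · have hv' := mt hFG.mem_iff.2 hv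
      exact iff_of_false (fun h => hv (mem_flatten_of_mem (getElem_mem _) h))
        (fun h => hv' (mem_flatten_of_mem (getElem_mem _) h))
  have hFi := hFrows _ (getElem_mem hiF)
  have hGi := hGrows _ (getElem_mem hiG)
  exact ((perm_ext_iff_of_nodup hFi.nodup hGi.nodup).2 hmem).eq_of_pairwise
    (fun _ _ _ _ h h' => absurd h h'.asymm) hFi hGi

theorem exists_growthEncoding_of_not_hasRunDrop {p : List α} {t : ℕ} (hnodup : p.Nodup)
    (hp : ¬ HasRunDrop (t + 1) p) : ∃ cs F, GrowthEncoding p [] (replicate t []) cs F :=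
  exists_growthEncoding (pre := []) [] (by simp) (by simpa using hnodup)
    (by simpa [readingWord] using IncreasingDominated.refl []) (by simpa using hp)

namespace GrowthEncoding

variable {l p q L : List α} {cs cs' : List ℕ} {T F F' : List (List α)} {t : ℕ}

theorem length_labelWord (h : GrowthEncoding p L T cs F) (l : List α) :
    (labelWord l cs F).length = p.length + l.length := by
  rw [labelWord, length_append, length_map, h.length_labels]

theorem labelWord_lt (h : GrowthEncoding p L T cs F) (hl : l ⊆ F.flatten) :
    ∀ c ∈ labelWord l cs F, c < T.length + 1 := by
  refine forall_mem_append.2 ⟨h.labels_lt, forall_mem_map.2 fun v hv => ?_⟩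
  exact h.length_rows ▸ rowIndex_lt_length (hl hv)

theorem flatten_perm_of_perm (h : GrowthEncoding p [] (replicate t []) cs F) (hpl : p ~ l) :
    F.flatten ~ l :=
  h.flatten_perm.trans (by simpa using hpl)

theorem eq_of_labelWord_eq (h : GrowthEncoding p [] (replicate t []) cs F)
    (h' : GrowthEncoding q [] (replicate t []) cs' F') (hl : l.Nodup) (hpl : p ~ l) (hql : q ~ l)
    (heq : labelWord l cs F = labelWord l cs' F') : p = q := by
  have hF : F.flatten ~ l := h.flatten_perm_of_perm hpl
  have hF' : F'.flatten ~ l := h'.flatten_perm_of_perm hql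
  obtain ⟨rfl, hindex⟩ := append_inj heq
    (by rw [h.length_labels, h'.length_labels, (hpl.trans hql.symm).length_eq])
  obtain rfl : F = F' := eq_of_rowIndex_eq (hF.nodup_iff.2 hl) (hF.trans hF'.symm)
    (h.length_rows.trans h'.length_rows.symm)
    (h.forall_pairwise_gt .nil (by simp) (by simp)) (h'.forall_pairwise_gt .nil (by simp) (by simp))
    (fun v hv => map_inj_left.1 hindex v (hF.mem_iff.1 hv))
  exact (h.injective h').1

end GrowthEncoding

theorem ncard_perm_not_hasRunDrop_le {l : List α} (hl : l.Nodup) (t : ℕ) :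
    {p : List α | p ~ l ∧ ¬ HasRunDrop (t + 1) p}.ncard ≤ (t + 1) ^ (2 * l.length) := by
  have hencode : ∀ p ∈ {p : List α | p ~ l ∧ ¬ HasRunDrop (t + 1) p},
      ∃ cs F, GrowthEncoding p [] (replicate t []) cs F := fun p ⟨hpl, hp⟩ =>
    exists_growthEncoding_of_not_hasRunDrop (hpl.nodup_iff.2 hl) hp
  choose! cs F hcode using hencode
  refine ncard_le_pow_of_injOn (f := fun p => labelWord l (cs p) (F p))
    (fun p hp q hq => (hcode p hp).eq_of_labelWord_eq (hcode q hq) hl hp.1 hq.1)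
    (fun p hp => ?_) (fun p hp => ?_)
  · rw [(hcode p hp).length_labelWord, hp.1.length_eq, two_mul]
  · simpa using (hcode p hp).labelWord_lt ((hcode p hp).flatten_perm_of_perm hp.1).symm.subset

end Growth

/-- For all `t ≥ 1` and `n ≥ 1`, the number `W_t(n)` of `t`-stack sortable
permutations of length `n` satisfies `W_t(n) ≤ (t+1)^{2n}`. -/
theorem stmt_3 (t n : ℕ) (ht : 1 ≤ t) (hn : 1 ≤ n) :
    {p : List ℕ | p.Perm (List.range' 1 n) ∧
        stackSort^[t] p = List.range' 1 n}.ncard ≤ (t + 1) ^ (2 * n) := by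
  have hfinite : {p : List ℕ | p ~ range' 1 n ∧ ¬ HasRunDrop (t + 1) p}.Finite :=
    (finite_toSet (range' 1 n).permutations).subset fun p hp => mem_permutations.2 hp.1
  calc {p : List ℕ | p ~ range' 1 n ∧ stackSort^[t] p = range' 1 n}.ncard
      ≤ {p : List ℕ | p ~ range' 1 n ∧ ¬ HasRunDrop (t + 1) p}.ncard :=
        Set.ncard_le_ncard
          (fun _ hp => ⟨hp.1, not_hasRunDrop_of_iterate_stackSort_eq_range' hp.2⟩) hfinite
    _ ≤ (t + 1) ^ (2 * n) := by simpa using ncard_perm_not_hasRunDrop_le nodup_range' t
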